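/- Let w : {1,…,n} → ℝ with w(j) > 0 for all j be a welfare basis function and f : {1,…,n} → ℝ. Then PoA(f,w,n) equals the infimum of (min over Nash equilibria a of W(a)) / (max over allocations a of W(a)) taken only over games in G_{f,w}^n in which every agent's admissible choice set A_i contains at most two elements. -/

import Mathlib

/-!
Restricting the class of games can only raise the infimum, so the point is that every game `G` with
positive optimum has a two-action game whose ratio is at most that of `G`. Let `e` be an equilibrium
of `G` of least welfare and `o` an optimal allocation, and keep for each agent `i` only the choices
`e i` and `o i`. In the restricted game `e` is still an equilibrium, so the worst equilibrium
welfare does not increase, and `o` is still available, so the optimum is unchanged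
(`exists_two_action`).

The equilibrium `e` exists because the game is a congestion game: Rosenthal's potential
`∑ r, v r * (f 1 + ⋯ + f |a|_r)` changes under a unilateral deviation by exactly the change of the
deviator's utility (`potential_eq`), hence any maximizer of it is an equilibrium (`exists_nash`).
This matters for `worstNash`, which would be the junk value `sInf ∅ = 0` in a game without
equilibria. Positivity of `w` enters only to bound all ratios below by `0`.
-/

/-- A resource allocation game with at most `n` agents: a finite resource set `R`,
a nonnegative value `v r` for each resource, `m ≤ n` agents, and for each agent a
nonempty finite collection of admissible choices (subsets of `R`). -/
structure RAGame (n : ℕ) where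
  R : Type
  [fintypeR : Fintype R]
  [decEqR : DecidableEq R]
  v : R → ℝ
  v_nonneg : ∀ r, 0 ≤ v r
  m : ℕ
  m_le : m ≤ n
  A : Fin m → Finset (Finset R)
  A_ne : ∀ i, (A i).Nonempty

attribute [instance] RAGame.fintypeR RAGame.decEqR

namespace RAGame

variable {n : ℕ}

/-- An allocation: each agent selects an admissible choice. -/
def Alloc (G : RAGame n) : Type := (i : Fin G.m) → {s : Finset G.R // s ∈ G.A i}

/-- `|a|_r`: the number of agents selecting resource `r` in allocation `a`. -/
def count (G : RAGame n) (a : G.Alloc) (r : G.R) : ℕ :=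
  (Finset.univ.filter fun i => r ∈ (a i).val).card

/-- The welfare `W(a) = Σ_{r covered} v_r · w(|a|_r)`. -/
def welfare (G : RAGame n) (w : ℕ → ℝ) (a : G.Alloc) : ℝ :=
  ∑ r ∈ Finset.univ.filter (fun r => 0 < G.count a r), G.v r * w (G.count a r)

/-- Agent `i`'s utility `U_i(a) = Σ_{r ∈ a_i} v_r · f(|a|_r)`. -/
def utility (G : RAGame n) (f : ℕ → ℝ) (a : G.Alloc) (i : Fin G.m) : ℝ :=
  ∑ r ∈ (a i).val, G.v r * f (G.count a r)

/-- Pure Nash equilibrium: no unilateral deviation improves an agent's utility. -/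
def IsNash (G : RAGame n) (f : ℕ → ℝ) (a : G.Alloc) : Prop :=
  ∀ (i : Fin G.m) (s : {s : Finset G.R // s ∈ G.A i}),
    G.utility f (Function.update a i s) i ≤ G.utility f a i

/-- The optimal welfare `max_{a ∈ A} W(a)`. -/
noncomputable def optVal (G : RAGame n) (w : ℕ → ℝ) : ℝ :=
  sSup { x : ℝ | ∃ a : G.Alloc, x = G.welfare w a }

/-- The worst equilibrium welfare `min_{a ∈ NE(G)} W(a)`. -/
noncomputable def worstNash (G : RAGame n) (f w : ℕ → ℝ) : ℝ :=
  sInf { x : ℝ | ∃ a : G.Alloc, G.IsNash f a ∧ x = G.welfare w a }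

end RAGame

/-- The price of anarchy `PoA(f,w,n)` over the class `G_{f,w}^n` of games with at
most `n` agents and strictly positive optimal welfare. -/
noncomputable def PoA (f w : ℕ → ℝ) (n : ℕ) : ℝ :=
  sInf { x : ℝ | ∃ G : RAGame n, 0 < G.optVal w ∧ x = G.worstNash f w / G.optVal w }

namespace RAGame

variable {n : ℕ}

instance (G : RAGame n) : Finite G.Alloc := by
  unfold Alloc
  infer_instance

instance (G : RAGame n) : Nonempty G.Alloc :=
  ⟨fun i => ⟨(G.A_ne i).choose, (G.A_ne i).choose_spec⟩⟩

/-- Rosenthal's potential `∑ r, v r * (f 1 + ⋯ + f |a|_r)`. -/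
def potential (G : RAGame n) (f : ℕ → ℝ) (a : G.Alloc) : ℝ :=
  ∑ r, G.v r * ∑ j ∈ Finset.range (G.count a r), f (j + 1)

/-- The number of agents other than `i` selecting resource `r`. -/
def countOthers (G : RAGame n) (a : G.Alloc) (i : Fin G.m) (r : G.R) : ℕ :=
  ((Finset.univ.erase i).filter fun k => r ∈ (a k).val).card

lemma count_eq (G : RAGame n) (a : G.Alloc) (i : Fin G.m) (r : G.R) :
    G.count a r = G.countOthers a i r + if r ∈ (a i).val then 1 else 0 := by
  unfold count countOthers
  conv_lhs => rw [← Finset.insert_erase (Finset.mem_univ i)]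
  rw [Finset.filter_insert]
  split_ifs
  · rw [Finset.card_insert_of_notMem (by simp)]
  · rfl

lemma countOthers_update (G : RAGame n) (a : G.Alloc) (i : Fin G.m)
    (s : {s : Finset G.R // s ∈ G.A i}) (r : G.R) :
    G.countOthers (Function.update a i s) i r = G.countOthers a i r := by
  unfold countOthers
  congr 1
  apply Finset.filter_congr
  intro k hk
  exact iff_of_eq (congrArg (fun t : {s : Finset G.R // s ∈ G.A k} => r ∈ t.val)
    (Function.update_of_ne (Finset.ne_of_mem_erase hk) s a))

/-- The potential splits into the part generated by the agents other than `i` and the utility of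
`i`; the first part does not depend on the choice of `i`. -/
lemma potential_eq (G : RAGame n) (f : ℕ → ℝ) (a : G.Alloc) (i : Fin G.m) :
    G.potential f a =
      (∑ r, G.v r * ∑ j ∈ Finset.range (G.countOthers a i r), f (j + 1)) + G.utility f a i := by
  have hu : G.utility f a i
      = ∑ r, if r ∈ (a i).val then G.v r * f (G.count a r) else 0 := by
    unfold utility
    rw [← Finset.sum_filter]
    simp
  rw [hu, potential, ← Finset.sum_add_distrib]
  refine Finset.sum_congr rfl fun r _ => ?_
  rw [G.count_eq a i r]
  split_ifs
  · rw [Finset.sum_range_succ]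
    ring
  · simp

lemma exists_nash (G : RAGame n) (f : ℕ → ℝ) : ∃ a : G.Alloc, G.IsNash f a := by
  obtain ⟨a, ha⟩ := Finite.exists_max (G.potential f)
  refine ⟨a, fun i s => ?_⟩
  obtain ⟨b, hb⟩ : ∃ b : G.Alloc, b = Function.update a i s := ⟨_, rfl⟩
  have hc : ∀ r, G.countOthers b i r = G.countOthers a i r := by
    intro r
    rw [hb]
    exact G.countOthers_update a i s r
  have h := ha b
  rw [G.potential_eq f a i, G.potential_eq f b i] at h
  simp only [hc] at h
  rw [← hb]
  linarith

lemma finite_welfare (G : RAGame n) (w : ℕ → ℝ) (P : G.Alloc → Prop) :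
    {x : ℝ | ∃ a : G.Alloc, P a ∧ x = G.welfare w a}.Finite :=
  (Set.finite_range (G.welfare w)).subset (by rintro _ ⟨a, _, rfl⟩; exact ⟨a, rfl⟩)

lemma finite_welfare_all (G : RAGame n) (w : ℕ → ℝ) :
    {x : ℝ | ∃ a : G.Alloc, x = G.welfare w a}.Finite :=
  (Set.finite_range (G.welfare w)).subset (by rintro _ ⟨a, rfl⟩; exact ⟨a, rfl⟩)

lemma welfare_le_optVal (G : RAGame n) (w : ℕ → ℝ) (a : G.Alloc) :
    G.welfare w a ≤ G.optVal w :=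
  le_csSup (G.finite_welfare_all w).bddAbove ⟨a, rfl⟩

lemma exists_optVal (G : RAGame n) (w : ℕ → ℝ) : ∃ a : G.Alloc, G.optVal w = G.welfare w a :=
  Set.Nonempty.csSup_mem (s := {x : ℝ | ∃ a : G.Alloc, x = G.welfare w a})
    ⟨_, Classical.arbitrary G.Alloc, rfl⟩ (G.finite_welfare_all w)

lemma exists_worstNash (G : RAGame n) (f w : ℕ → ℝ) :
    ∃ a : G.Alloc, G.IsNash f a ∧ G.worstNash f w = G.welfare w a := by
  obtain ⟨a, ha⟩ := G.exists_nash f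
  exact Set.Nonempty.csInf_mem (s := {x : ℝ | ∃ a : G.Alloc, G.IsNash f a ∧ x = G.welfare w a})
    ⟨_, a, ha, rfl⟩ (G.finite_welfare w _)

lemma worstNash_le (G : RAGame n) (f w : ℕ → ℝ) (a : G.Alloc) (ha : G.IsNash f a) :
    G.worstNash f w ≤ G.welfare w a :=
  csInf_le (G.finite_welfare w _).bddBelow ⟨a, ha, rfl⟩

lemma welfare_nonneg (G : RAGame n) (w : ℕ → ℝ) (hw : ∀ j, 1 ≤ j → j ≤ n → 0 < w j)
    (a : G.Alloc) : 0 ≤ G.welfare w a := by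
  refine Finset.sum_nonneg fun r hr => mul_nonneg (G.v_nonneg r) (hw _ ?_ ?_).le
  · exact (Finset.mem_filter.1 hr).2
  · refine le_trans (Finset.card_le_univ _) ?_
    simpa using G.m_le

/-- The game in which agent `i` keeps only the choices `a i` and `b i`. -/
def restrict (G : RAGame n) (a b : G.Alloc) : RAGame n where
  R := G.R
  v := G.v
  v_nonneg := G.v_nonneg
  m := G.m
  m_le := G.m_le
  A i := {(a i).val, (b i).val}
  A_ne i := ⟨(a i).val, by simp⟩

/-- An allocation of the restricted game, seen in the original game. -/
def incl (G : RAGame n) (a b : G.Alloc) (c : (G.restrict a b).Alloc) : G.Alloc := fun i =>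
  ⟨(c i).val, by
    have h : ∀ t ∈ ({(a i).val, (b i).val} : Finset (Finset G.R)), t ∈ G.A i := by
      intro t ht
      rcases Finset.mem_insert.1 ht with rfl | ht
      · exact (a i).property
      · rw [Finset.mem_singleton.1 ht]
        exact (b i).property
    exact h _ (c i).property⟩

lemma welfare_incl (G : RAGame n) (w : ℕ → ℝ) (a b : G.Alloc) (c : (G.restrict a b).Alloc) :
    G.welfare w (G.incl a b c) = (G.restrict a b).welfare w c := rfl

lemma isNash_restrict (G : RAGame n) (f : ℕ → ℝ) (a b : G.Alloc) (c : (G.restrict a b).Alloc)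
    (h : G.IsNash f (G.incl a b c)) : (G.restrict a b).IsNash f c := by
  intro (i : Fin G.m) s
  have key : G.incl a b (Function.update c i s)
      = Function.update (G.incl a b c) i (G.incl a b (Function.update c i s) i) := by
    funext k
    by_cases hk : k = i
    · subst hk
      exact (Function.update_self k _ (G.incl a b c)).symm
    · refine Eq.trans (Subtype.ext ?_) (Function.update_of_ne hk _ (G.incl a b c)).symm
      have hu : Function.update c i s k = c k := Function.update_of_ne hk s c
      exact congrArg (fun t : {t : Finset G.R // t ∈ (G.restrict a b).A k} => t.val) hu
  have h' := h i (G.incl a b (Function.update c i s) i)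
  rw [← key] at h'
  exact h'

lemma exists_two_action (G : RAGame n) (f w : ℕ → ℝ) :
    ∃ H : RAGame n, (∀ i, (H.A i).card ≤ 2) ∧ H.optVal w = G.optVal w ∧
      H.worstNash f w ≤ G.worstNash f w := by
  obtain ⟨e, he, hew⟩ := G.exists_worstNash f w
  obtain ⟨o, ho⟩ := G.exists_optVal w
  let e' : (G.restrict e o).Alloc := fun i => ⟨(e i).val, Finset.mem_insert_self _ _⟩
  let o' : (G.restrict e o).Alloc := fun i =>
    ⟨(o i).val, Finset.mem_insert_of_mem (Finset.mem_singleton_self _)⟩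
  refine ⟨G.restrict e o, fun i => Finset.card_le_two, le_antisymm ?_ ?_, ?_⟩
  · obtain ⟨c, hc⟩ := (G.restrict e o).exists_optVal w
    rw [hc, ← welfare_incl]
    exact G.welfare_le_optVal w _
  · rw [ho]
    exact (G.restrict e o).welfare_le_optVal w o'
  · rw [hew]
    exact (G.restrict e o).worstNash_le f w e' (G.isNash_restrict f e o e' he)

end RAGame

/-- Step 1 of the proof of Theorem 2: the price of anarchy is unchanged if the
infimum is restricted to games in which every agent's admissible choice set
contains at most two elements. -/
theorem poa_two_action_games (n : ℕ) (w f : ℕ → ℝ)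
    (hw : ∀ j, 1 ≤ j → j ≤ n → 0 < w j) :
    PoA f w n =
      sInf { x : ℝ | ∃ G : RAGame n, (∀ i, (G.A i).card ≤ 2) ∧ 0 < G.optVal w ∧
          x = G.worstNash f w / G.optVal w } := by
  unfold PoA
  have hpos : ∀ G : RAGame n, 0 < G.optVal w → 0 ≤ G.worstNash f w / G.optVal w := by
    intro G hG
    obtain ⟨a, _, ha⟩ := G.exists_worstNash f w
    rw [ha]
    exact div_nonneg (G.welfare_nonneg w hw a) hG.le
  have htwo : ∀ G : RAGame n, 0 < G.optVal w → ∃ H : RAGame n, (∀ i, (H.A i).card ≤ 2) ∧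
      0 < H.optVal w ∧ H.worstNash f w / H.optVal w ≤ G.worstNash f w / G.optVal w := by
    intro G hG
    obtain ⟨H, h2, ho, hn⟩ := G.exists_two_action f w
    refine ⟨H, h2, ho ▸ hG, ?_⟩
    rw [ho]
    gcongr
  -- If no game has positive optimum (as for `n = 0`), both infima are over the empty set.
  by_cases hne : ∃ G : RAGame n, 0 < G.optVal w
  · obtain ⟨G, hG⟩ := hne
    obtain ⟨H, h2, hH, _⟩ := htwo G hG
    apply le_antisymm
    · refine csInf_le_csInf ⟨0, ?_⟩ ⟨_, H, h2, hH, rfl⟩ ?_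
      · rintro _ ⟨K, hK, rfl⟩
        exact hpos K hK
      · rintro _ ⟨K, _, hK, rfl⟩
        exact ⟨K, hK, rfl⟩
    · refine le_csInf ⟨_, G, hG, rfl⟩ ?_
      rintro _ ⟨K, hK, rfl⟩
      obtain ⟨L, hL2, hL, hle⟩ := htwo K hK
      refine le_trans (csInf_le ⟨0, ?_⟩ ⟨L, hL2, hL, rfl⟩) hle
      rintro _ ⟨M, _, hM, rfl⟩
      exact hpos M hM
  · congr 1
    ext x
    constructor
    · rintro ⟨G, hG, _⟩
      exact absurd ⟨G, hG⟩ hne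
    · rintro ⟨G, _, hG, _⟩
      exact absurd ⟨G, hG⟩ hne
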